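/- For every unital additive semigroup Γ ⊆ ℝ (i.e., 0 ∈ Γ and Γ + Γ ⊆ Γ), the Banach space AP_Γ(ℝ) of almost periodic functions on ℝ with spectrum contained in Γ has the approximation property. -/

import Mathlib

open Complex Filter Topology Set Metric
open scoped BoundedContinuousFunction

noncomputable section

namespace SAP

variable {B : Type*} [NormedAddCommGroup B] [NormedSpace ℂ B]

/-- translate of a bounded continuous function on `ℝ` -/
def translateR (f : ℝ →ᵇ B) (τ : ℝ) : ℝ →ᵇ B :=
  f.compContinuous ⟨fun x => x + τ, by continuity⟩

/-- Bohr almost periodic functions -/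
def IsAP (f : ℝ →ᵇ B) : Prop := IsCompact (closure (Set.range (translateR f)))

/-- mean value of a function on `ℝ` -/
def meanValueR (g : ℝ → B) : B :=
  haveI : Nonempty B := ⟨0⟩
  limUnder atTop (fun T : ℝ => (2 * T)⁻¹ • ∫ x in (-T)..T, g x)

/-- Bohr-Fourier coefficient -/
def bohrCoeffR (g : ℝ → B) (lam : ℝ) : B :=
  meanValueR (fun x => Complex.exp (-(Complex.I * lam * x)) • g x)

/-- spectrum of an almost periodic function -/
def apSpec (g : ℝ → B) : Set ℝ := {lam | bohrCoeffR g lam ≠ 0}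

/-- the set `AP_Γ(ℝ)` of almost periodic functions with spectrum in `Γ` -/
def APset (Γ : Set ℝ) : Set (ℝ →ᵇ ℂ) := {f | IsAP f ∧ apSpec ⇑f ⊆ Γ}

/-- unital additive semi-group in ℝ -/
def IsUnitalSemigroup (Γ : Set ℝ) : Prop :=
  (0 : ℝ) ∈ Γ ∧ ∀ a ∈ Γ, ∀ b ∈ Γ, a + b ∈ Γ

/-- the approximation property of a complex normed space -/
def HasApproxProperty (X : Type*) [NormedAddCommGroup X] [NormedSpace ℂ X] : Prop :=
  ∀ K : Set X, IsCompact K → ∀ ε : ℝ, 0 < ε →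
    ∃ T : X →L[ℂ] X, FiniteDimensional ℂ (LinearMap.range (T : X →ₗ[ℂ] X)) ∧
      ∀ x ∈ K, ‖T x - x‖ < ε

end SAP

namespace SAP

theorem exists_finset_add_sub_sub_of_re_nonneg {M : ℕ} [NeZero M] (C : Finset (ZMod M)) {α : ℝ}
    (hα : 0 < α) (hC : α * M ≤ C.card) :
    ∃ B : Finset (ZMod M), (B.card : ℝ) ≤ 2 / α ^ 2 ∧
      ∀ x, (∀ k ∈ B, 0 ≤ (ZMod.stdAddChar (k * x)).re) →
        ∃ a ∈ C, ∃ b ∈ C, ∃ c ∈ C, ∃ d ∈ C, a + b - c - d = x := by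
  classical
  set ψ : AddChar (ZMod M) ℂ := ZMod.stdAddChar with hψ
  have hM : (0 : ℝ) < M := by exact_mod_cast Nat.pos_of_ne_zero (NeZero.ne M)
  have hn : (0 : ℝ) < C.card := lt_of_lt_of_le (by positivity) hC
  have hnM : (C.card : ℝ) ≤ M := by
    have := C.card_le_univ
    rw [ZMod.card] at this
    exact_mod_cast this
  have hα1 : α ≤ 1 := by
    by_contra h
    push Not at h
    nlinarith
  have horth : ∀ b : ZMod M, ∑ k, ψ (k * b) = if b = 0 then (M : ℂ) else 0 := fun b => by
    have := AddChar.sum_mulShift b (ZMod.isPrimitive_stdAddChar M)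
    simpa [ZMod.card] using this
  let P : ZMod M → ℂ := fun k => ∑ a ∈ C, ψ (k * a)
  have hconj : ∀ k, (starRingEnd ℂ) (P k) = ∑ a ∈ C, ψ (-(k * a)) := fun k => by
    simp only [P, map_sum, AddChar.map_neg_eq_conj]
  have hsq : ∀ k, ((‖P k‖ ^ 2 : ℝ) : ℂ) = ∑ a ∈ C, ∑ c ∈ C, ψ (k * (a - c)) := fun k => by
    rw [← Complex.normSq_eq_norm_sq, Complex.normSq_eq_conj_mul_self, mul_comm, hconj,
      Finset.sum_mul_sum]
    refine Finset.sum_congr rfl fun a _ => Finset.sum_congr rfl fun c _ => ?_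
    rw [← AddChar.map_add_eq_mul]
    congr 1
    ring
  have hpars : ∑ k, ‖P k‖ ^ 2 = M * C.card := by
    have : ((∑ k, ‖P k‖ ^ 2 : ℝ) : ℂ) = ((M * C.card : ℝ) : ℂ) := by
      rw [Complex.ofReal_sum]
      simp_rw [hsq]
      rw [Finset.sum_comm]
      have : ∀ a ∈ C, ∑ k, ∑ c ∈ C, ψ (k * (a - c)) = M := fun a ha => by
        rw [Finset.sum_comm]
        simp_rw [horth, sub_eq_zero]
        simp [ha]
      rw [Finset.sum_congr rfl this]
      simp [mul_comm]
    exact_mod_cast this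
  let B : Finset (ZMod M) := Finset.univ.filter fun k => α / 2 * (C.card : ℝ) ^ 2 ≤ ‖P k‖ ^ 2
  refine ⟨B, ?_, fun x hx => ?_⟩
  · have h1 : (B.card : ℝ) * (α / 2 * (C.card : ℝ) ^ 2) ≤ M * C.card := by
      rw [← hpars, ← nsmul_eq_mul]
      refine (Finset.card_nsmul_le_sum B _ _ fun k hk => (Finset.mem_filter.1 hk).2).trans ?_
      exact Finset.sum_le_sum_of_subset_of_nonneg (Finset.subset_univ _) fun _ _ _ => by positivity
    have h2 : (B.card : ℝ) * (α / 2 * C.card) ≤ M := by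
      nlinarith
    rw [le_div_iff₀ (by positivity)]
    have h3 : (B.card : ℝ) * (α / 2 * (α * M)) ≤ M :=
      le_trans (by gcongr) h2
    nlinarith
  · by_contra hno
    push Not at hno
    have hquad : ∑ k, ((‖P k‖ ^ 2 : ℝ) : ℂ) ^ 2 * ψ (-(k * x)) = 0 := by
      have : ∀ k, ((‖P k‖ ^ 2 : ℝ) : ℂ) ^ 2 * ψ (-(k * x)) =
          ∑ a ∈ C, ∑ b ∈ C, ∑ c ∈ C, ∑ d ∈ C, ψ (k * (a + b - c - d - x)) := fun k => by
        rw [sq, hsq, Finset.sum_mul_sum, Finset.sum_mul]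
        refine Finset.sum_congr rfl fun a _ => ?_
        rw [Finset.sum_mul]
        refine Finset.sum_congr rfl fun b _ => ?_
        rw [Finset.sum_mul_sum, Finset.sum_mul]
        refine Finset.sum_congr rfl fun c _ => ?_
        rw [Finset.sum_mul]
        refine Finset.sum_congr rfl fun d _ => ?_
        rw [← AddChar.map_add_eq_mul, ← AddChar.map_add_eq_mul]
        congr 1
        ring
      simp_rw [this]
      rw [Finset.sum_comm]
      refine Finset.sum_eq_zero fun a ha => ?_
      rw [Finset.sum_comm]
      refine Finset.sum_eq_zero fun b hb => ?_
      rw [Finset.sum_comm]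
      refine Finset.sum_eq_zero fun c hc => ?_
      rw [Finset.sum_comm]
      refine Finset.sum_eq_zero fun d hd => ?_
      rw [horth, if_neg (sub_ne_zero.2 (hno a ha b hb c hc d hd))]
    have hre : ∑ k, (‖P k‖ ^ 2) ^ 2 * (ψ (k * x)).re = 0 := by
      have := congrArg Complex.re hquad
      rw [Complex.re_sum] at this
      simpa only [← Complex.ofReal_pow, Complex.re_ofReal_mul, AddChar.map_neg_eq_conj,
        Complex.conj_re, Complex.zero_re] using this
    have hP0 : P 0 = C.card := by simp [P]
    have hlow : ∀ k, (if k = 0 then (C.card : ℝ) ^ 4 else 0) - α / 2 * (C.card : ℝ) ^ 2 * ‖P k‖ ^ 2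
        ≤ (‖P k‖ ^ 2) ^ 2 * (ψ (k * x)).re := fun k => by
      by_cases hk0 : k = 0
      · subst hk0
        have : 0 ≤ α / 2 * (C.card : ℝ) ^ 2 * ‖P 0‖ ^ 2 := by positivity
        simp only [if_true, zero_mul, AddChar.map_zero_eq_one, Complex.one_re]
        rw [hP0] at this ⊢
        simp only [Complex.norm_natCast] at this ⊢
        nlinarith
      · rw [if_neg hk0, zero_sub]
        by_cases hk : k ∈ B
        · have h1 : 0 ≤ (‖P k‖ ^ 2) ^ 2 * (ψ (k * x)).re := mul_nonneg (by positivity) (hx k hk)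
          have : 0 ≤ α / 2 * (C.card : ℝ) ^ 2 * ‖P k‖ ^ 2 := by positivity
          linarith
        · have hk' : ‖P k‖ ^ 2 ≤ α / 2 * (C.card : ℝ) ^ 2 := by
            by_contra h
            exact hk (Finset.mem_filter.2 ⟨Finset.mem_univ _, (not_le.1 h).le⟩)
          have h1 : -1 ≤ (ψ (k * x)).re := by
            have := (abs_le.1 (Complex.abs_re_le_norm (ψ (k * x)))).1
            rwa [AddChar.norm_apply] at this
          have h2 : (‖P k‖ ^ 2) ^ 2 ≤ α / 2 * (C.card : ℝ) ^ 2 * ‖P k‖ ^ 2 := by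
            rw [sq (‖P k‖ ^ 2)]
            gcongr
          nlinarith [sq_nonneg (‖P k‖ ^ 2)]
    have hsum := Finset.sum_le_sum fun k (_ : k ∈ Finset.univ) => hlow k
    rw [hre, Finset.sum_sub_distrib, ← Finset.mul_sum, hpars, Finset.sum_ite_eq'] at hsum
    simp only [Finset.mem_univ, if_true] at hsum
    have h3 : 0 < (C.card : ℝ) ^ 3 := by positivity
    nlinarith [mul_le_mul_of_nonneg_left hC h3.le, mul_pos h3 hn]

theorem exists_frequencies_of_coloring_of_lt {κ : Type*} [Fintype κ] (c : ℕ → κ) (N : ℕ)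
    (hN : 0 < N) :
    ∃ θ : Fin (32 * Fintype.card κ ^ 2) → ℝ, (∀ j, θ j ∈ Set.Icc (0 : ℝ) 1) ∧
      ∀ x : ℤ, |x| < N → (∀ j, 0 ≤ Real.cos (2 * Real.pi * θ j * x)) →
        ∃ p q r s : ℕ, c p = c r ∧ c q = c s ∧ (p : ℤ) + q - r - s = x := by
  classical
  have hκ : (Finset.univ : Finset κ).Nonempty := ⟨c 0, Finset.mem_univ _⟩
  have hm : (0 : ℝ) < Fintype.card κ := by
    exact_mod_cast Fintype.card_pos_iff.2 ⟨c 0⟩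
  set m := Fintype.card κ with hmdef
  have hNR : (0 : ℝ) < N := by exact_mod_cast hN
  obtain ⟨col, -, hcol⟩ := Finset.exists_le_card_fiber_of_nsmul_le_card_of_maps_to
    (s := Finset.range N) (t := (Finset.univ : Finset κ)) (f := c) (b := (N : ℝ) / m)
    (fun _ _ => Finset.mem_univ _) hκ (by
      rw [Finset.card_univ, ← hmdef, Finset.card_range, nsmul_eq_mul]
      field_simp
      exact le_rfl)
  set D := (Finset.range N).filter fun a => c a = col with hD
  have hDlt : ∀ a ∈ D, a < N := fun a ha => Finset.mem_range.1 (Finset.mem_filter.1 ha).1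
  have : NeZero (4 * N) := ⟨by omega⟩
  have hinj : Set.InjOn (fun a : ℕ => (a : ZMod (4 * N))) D := by
    intro a ha b hb hab
    have h1 := hDlt a ha
    have h2 := hDlt b hb
    have := (ZMod.natCast_eq_natCast_iff' a b (4 * N)).1 hab
    rwa [Nat.mod_eq_of_lt (by omega), Nat.mod_eq_of_lt (by omega)] at this
  obtain ⟨B, hBcard, hB⟩ := exists_finset_add_sub_sub_of_re_nonneg
    (D.image fun a : ℕ => (a : ZMod (4 * N))) (α := 1 / (4 * m)) (by positivity) (by
      rw [Finset.card_image_of_injOn hinj]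
      refine le_trans (le_of_eq ?_) hcol
      push_cast
      field_simp)
  have hBcard' : B.card ≤ 32 * m ^ 2 := by
    have : (2 : ℝ) / (1 / (4 * m)) ^ 2 = 32 * m ^ 2 := by field_simp; norm_num
    rw [this] at hBcard
    exact_mod_cast hBcard
  refine ⟨fun j => ((B.toList.getD j 0).val : ℝ) / ((4 * N : ℕ) : ℝ), fun j => ⟨by positivity, ?_⟩,
    fun x hx hcos => ?_⟩
  · rw [div_le_one (by exact_mod_cast Nat.pos_of_ne_zero (NeZero.ne (4 * N)))]
    exact_mod_cast (ZMod.val_lt _).le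
  · obtain ⟨a, ha, b, hb, d, hd, e, he, habde⟩ := hB (x : ZMod (4 * N)) fun k hk => by
      obtain ⟨i, hi, rfl⟩ := List.getElem_of_mem (Finset.mem_toList.2 hk)
      have hi' : i < 32 * m ^ 2 := by
        rw [Finset.length_toList] at hi
        omega
      have h1 := hcos ⟨i, hi'⟩
      simp only [List.getD_eq_getElem _ _ hi] at h1
      set k := B.toList[i]
      have h2 : k * (x : ZMod (4 * N)) = (((k.val : ℤ) * x : ℤ) : ZMod (4 * N)) := by
        push_cast
        rw [ZMod.natCast_zmod_val]
      rw [h2, ZMod.stdAddChar_coe]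
      have h3 : (2 * Real.pi * I * ((k.val : ℤ) * x : ℤ) / ((4 * N : ℕ) : ℂ) : ℂ) =
          ((2 * Real.pi * ((k.val : ℝ) / ((4 * N : ℕ) : ℝ)) * x : ℝ) : ℂ) * I := by
        push_cast
        ring
      rw [h3, Complex.exp_ofReal_mul_I_re]
      exact h1
    simp only [Finset.mem_image] at ha hb hd he
    obtain ⟨a, ha, rfl⟩ := ha
    obtain ⟨b, hb, rfl⟩ := hb
    obtain ⟨d, hd, rfl⟩ := hd
    obtain ⟨e, he, rfl⟩ := he
    have hc : ∀ a ∈ D, c a = col := fun a ha => (Finset.mem_filter.1 ha).2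
    refine ⟨a, b, d, e, by rw [hc a ha, hc d hd], by rw [hc b hb, hc e he], ?_⟩
    have h1 : (((a : ℤ) + b - d - e - x : ℤ) : ZMod (4 * N)) = 0 := by
      push_cast
      rw [habde, sub_self]
    have h2 := (ZMod.intCast_zmod_eq_zero_iff_dvd _ _).1 h1
    have := hDlt a ha
    have := hDlt b hb
    have := hDlt d hd
    have := hDlt e he
    have h3 : |(a : ℤ) + b - d - e - x| < ((4 * N : ℕ) : ℤ) := by
      rw [abs_lt] at hx ⊢
      push_cast
      omega
    have := Int.eq_zero_of_abs_lt_dvd h2 h3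
    omega

theorem exists_frequencies_of_coloring {κ : Type*} [Fintype κ] (c : ℕ → κ) :
    ∃ J : ℕ, ∃ θ : Fin J → ℝ, (∀ j, θ j ∈ Set.Icc (0 : ℝ) 1) ∧
      ∀ x : ℤ, (∀ j, 0 < Real.cos (2 * Real.pi * θ j * x)) →
        ∃ p q r s : ℕ, c p = c r ∧ c q = c s ∧ (p : ℤ) + q - r - s = x := by
  choose θ hθ hx using fun N : ℕ => exists_frequencies_of_coloring_of_lt c (N + 1) N.succ_pos
  obtain ⟨θ', hθ', φ, hφ, hlim⟩ := (isCompact_univ_pi fun _ => isCompact_Icc).tendsto_subseq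
    (x := θ) fun N j _ => hθ N j
  refine ⟨_, θ', fun j => hθ' j (Set.mem_univ j), fun x hcos => ?_⟩
  have hev : ∀ᶠ n in atTop, ∀ j, 0 < Real.cos (2 * Real.pi * θ (φ n) j * x) := by
    rw [eventually_all]
    intro j
    have h1 : Tendsto (fun n => θ (φ n) j) atTop (𝓝 (θ' j)) := (tendsto_pi_nhds.1 hlim) j
    have h2 : Tendsto (fun n => Real.cos (2 * Real.pi * θ (φ n) j * x)) atTop
        (𝓝 (Real.cos (2 * Real.pi * θ' j * x))) :=
      (Real.continuous_cos.tendsto _).comp ((h1.const_mul _).mul_const _)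
    exact h2.eventually (lt_mem_nhds (hcos j))
  obtain ⟨n, hn, hn'⟩ := (hev.and (eventually_ge_atTop x.natAbs)).exists
  refine hx (φ n) x ?_ fun j => (hn j).le
  have := hφ.id_le n
  simp only [id] at this
  rw [Int.abs_eq_natAbs]
  omega

theorem norm_exp_I_mul_ofReal_sub_one_le_abs (x : ℝ) : ‖cexp (I * (x : ℂ)) - 1‖ ≤ |x| := by
  rw [Complex.norm_exp_I_mul_ofReal_sub_one, Real.norm_eq_abs, abs_mul, abs_two]
  have := Real.abs_sin_le_abs (x := x / 2)
  rw [abs_div, abs_two] at this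
  linarith

theorem four_mul_abs_sub_round_le (u : ℝ) :
    4 * |u - round u| ≤ ‖cexp (I * ((2 * Real.pi * u : ℝ) : ℂ)) - 1‖ := by
  set v := u - round u with hv
  have hv2 : |v| ≤ 1 / 2 := abs_sub_round u
  have h1 : cexp (I * ((2 * Real.pi * u : ℝ) : ℂ)) = cexp (I * ((2 * Real.pi * v : ℝ) : ℂ)) := by
    rw [Complex.exp_eq_exp_iff_exists_int]
    refine ⟨round u, ?_⟩
    rw [hv]
    push_cast
    ring
  rw [h1, Complex.norm_exp_I_mul_ofReal_sub_one, Real.norm_eq_abs, abs_mul, abs_two]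
  have hpi := Real.pi_pos
  have h2 : 2 / Real.pi * (Real.pi * |v|) ≤ Real.sin (Real.pi * |v|) :=
    Real.mul_le_sin (by positivity) (by nlinarith)
  have h3 : 2 / Real.pi * (Real.pi * |v|) = 2 * |v| := by field_simp
  have h4 : Real.sin (Real.pi * |v|) ≤ |Real.sin (2 * Real.pi * v / 2)| := by
    have h5 : 2 * Real.pi * v / 2 = Real.pi * v := by ring
    rw [h5]
    rcases abs_cases v with ⟨h, -⟩ | ⟨h, -⟩
    · rw [h]
      exact le_abs_self _
    · rw [h, mul_neg, Real.sin_neg]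
      exact neg_le_abs _
  linarith

theorem exists_bohr_set_subset {E : Type*} [PseudoMetricSpace E] (Φ : ℝ → E)
    (hinv : ∀ x y z, dist (Φ (x + z)) (Φ (y + z)) = dist (Φ x) (Φ y))
    (hcont : ContinuousAt Φ 0) (htb : TotallyBounded (Set.range Φ)) {ε : ℝ} (hε : 0 < ε) :
    ∃ Λ : Finset ℝ, ∃ δ > 0, ∀ y : ℝ,
      (∀ l ∈ Λ, ‖cexp (I * ((l * y : ℝ) : ℂ)) - 1‖ < δ) → dist (Φ y) (Φ 0) < ε := by
  classical
  obtain ⟨t, ht, hcov⟩ := Metric.totallyBounded_iff.1 htb (ε / 8) (by positivity)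
  have := ht.fintype
  obtain ⟨h₀, hh₀, hball⟩ := Metric.continuousAt_iff.1 hcont (ε / 4) (by positivity)
  set h := h₀ / 2 with hh
  have hpos : 0 < h := by positivity
  have hex : ∀ n : ℕ, ∃ y : t, dist (Φ (n * h)) y < ε / 8 := fun n => by
    have := hcov (Set.mem_range_self (n * h : ℝ))
    simp only [Set.mem_iUnion, Metric.mem_ball] at this
    obtain ⟨y, hy, hd⟩ := this
    exact ⟨⟨y, hy⟩, hd⟩
  choose c hc using hex
  obtain ⟨J, θ, hθ, hθc⟩ := exists_frequencies_of_coloring c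
  have hcc : ∀ p r : ℕ, c p = c r → dist (Φ (p * h - r * h)) (Φ 0) < ε / 4 := fun p r hpr => by
    have h1 := hinv (p * h - r * h) 0 (r * h)
    rw [sub_add_cancel, zero_add] at h1
    rw [← h1]
    have h2 := hc p
    rw [hpr] at h2
    have h3 := hc r
    linarith [dist_triangle_right (Φ (p * h)) (Φ (r * h)) (c r : E)]
  refine ⟨insert (2 * Real.pi / h) (Finset.univ.image fun j => 2 * Real.pi * θ j / h), 1 / 3,
    by norm_num, fun y hy => ?_⟩
  set u := y / h with hu
  have hyu : y = u * h := by rw [hu]; field_simp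
  set n := round u
  set v := u - n with hv
  have hv4 : 4 * |v| < 1 / 3 := by
    refine (four_mul_abs_sub_round_le u).trans_lt ?_
    have := hy _ (Finset.mem_insert_self _ _)
    rwa [show 2 * Real.pi / h * y = 2 * Real.pi * u by rw [hu]; ring] at this
  obtain ⟨p, q, r, s, hpr, hqs, hn⟩ := hθc n fun j => by
    have h1 := hy _ (Finset.mem_insert_of_mem (Finset.mem_image_of_mem _ (Finset.mem_univ j)))
    rw [show 2 * Real.pi * θ j / h * y = 2 * Real.pi * θ j * u by rw [hu]; ring] at h1
    have h2 := norm_exp_I_mul_ofReal_sub_one_le_abs (2 * Real.pi * θ j * v)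
    have h3 : |2 * Real.pi * θ j * v| ≤ 8 * |v| := by
      rw [abs_mul]
      gcongr
      rw [abs_of_nonneg (mul_nonneg (by positivity) (hθ j).1)]
      have := Real.pi_lt_four
      have := Real.pi_pos
      nlinarith [(hθ j).1, (hθ j).2]
    have h4 : cexp (I * ((2 * Real.pi * θ j * u : ℝ) : ℂ)) =
        cexp (I * ((2 * Real.pi * θ j * n : ℝ) : ℂ)) *
          cexp (I * ((2 * Real.pi * θ j * v : ℝ) : ℂ)) := by
      rw [← Complex.exp_add, hv]
      congr 1
      push_cast
      ring
    set A := cexp (I * ((2 * Real.pi * θ j * n : ℝ) : ℂ)) with hA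
    set V := cexp (I * ((2 * Real.pi * θ j * v : ℝ) : ℂ))
    have hAn : ‖A‖ = 1 := by
      rw [hA, mul_comm, Complex.norm_exp_ofReal_mul_I]
    have h5 : ‖A - 1‖ ≤ ‖A * V - 1‖ + ‖V - 1‖ := by
      have : A - 1 = (A * V - 1) - A * (V - 1) := by ring
      rw [this]
      refine (norm_sub_le _ _).trans ?_
      rw [norm_mul, hAn, one_mul]
    rw [h4] at h1
    have h6 : A.re = Real.cos (2 * Real.pi * θ j * n) := by
      rw [hA, mul_comm, Complex.exp_ofReal_mul_I_re]
    have h7 := (abs_le.1 (Complex.abs_re_le_norm (A - 1))).1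
    rw [Complex.sub_re, Complex.one_re, h6] at h7
    linarith
  have hnR : (n : ℝ) = p + q - r - s := by
    rw [← hn]
    push_cast
    ring
  have hy1 : dist (Φ y) (Φ (n * h)) < ε / 4 := by
    have h1 := hinv (v * h) 0 (n * h)
    rw [zero_add, show v * h + n * h = y by rw [hyu, hv]; ring] at h1
    rw [h1]
    apply hball
    rw [Real.dist_eq, sub_zero, abs_mul, abs_of_pos hpos]
    nlinarith
  have hy2 : dist (Φ (n * h)) (Φ (q * h - s * h)) < ε / 4 := by
    have h1 := hinv (p * h - r * h) 0 (q * h - s * h)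
    rw [zero_add, show p * h - r * h + (q * h - s * h) = n * h by rw [hnR]; ring] at h1
    rw [h1]
    exact hcc p r hpr
  have hy3 := hcc q s hqs
  linarith [dist_triangle (Φ y) (Φ (n * h)) (Φ 0),
    dist_triangle (Φ (n * h)) (Φ (q * h - s * h)) (Φ 0)]

/-- the exponential `x ↦ exp (i l x)` -/
def expBCF (l : ℝ) : ℝ →ᵇ ℂ :=
  BoundedContinuousFunction.ofNormedAddCommGroup (fun x => cexp (I * ((l * x : ℝ) : ℂ)))
    (by fun_prop) 1 fun x => by rw [mul_comm, Complex.norm_exp_ofReal_mul_I]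

theorem expBCF_apply (l x : ℝ) : expBCF l x = cexp (I * ((l * x : ℝ) : ℂ)) := rfl

theorem norm_expBCF_apply (l x : ℝ) : ‖expBCF l x‖ = 1 := by
  rw [expBCF_apply, mul_comm, Complex.norm_exp_ofReal_mul_I]

theorem expBCF_apply_add (l x y : ℝ) : expBCF l (x + y) = expBCF l x * expBCF l y := by
  simp only [expBCF_apply, ← Complex.exp_add]
  congr 1
  push_cast
  ring

theorem expBCF_add (l m : ℝ) : expBCF (l + m) = expBCF l * expBCF m := by
  ext x
  simp only [BoundedContinuousFunction.coe_mul, Pi.mul_apply, expBCF_apply, ← Complex.exp_add]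
  congr 1
  push_cast
  ring

theorem expBCF_zero : expBCF 0 = 1 := by
  ext x
  simp [expBCF_apply]

theorem expBCF_neg_apply (l x : ℝ) : expBCF (-l) x = (starRingEnd ℂ) (expBCF l x) := by
  rw [expBCF_apply, expBCF_apply, ← Complex.exp_conj]
  congr 1
  simp

theorem expBCF_neg_mul_apply (l x : ℝ) : expBCF (-l) x * expBCF l x = 1 := by
  rw [expBCF_apply, expBCF_apply, ← Complex.exp_add]
  simp

/-- trigonometric polynomials -/
abbrev trigPoly : Submodule ℂ (ℝ →ᵇ ℂ) := Submodule.span ℂ (Set.range expBCF)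

theorem expBCF_mem_trigPoly (l : ℝ) : expBCF l ∈ trigPoly := Submodule.subset_span ⟨l, rfl⟩

theorem one_mem_trigPoly : (1 : ℝ →ᵇ ℂ) ∈ trigPoly := expBCF_zero ▸ expBCF_mem_trigPoly 0

theorem mul_mem_trigPoly {f g : ℝ →ᵇ ℂ} (hf : f ∈ trigPoly) (hg : g ∈ trigPoly) :
    f * g ∈ trigPoly := by
  have h := Submodule.mul_mem_mul hf hg
  rw [Submodule.span_mul_span] at h
  refine Submodule.span_mono ?_ h
  rintro _ ⟨_, ⟨l, rfl⟩, _, ⟨m, rfl⟩, rfl⟩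
  exact ⟨l + m, expBCF_add l m⟩

theorem pow_mem_trigPoly {f : ℝ →ᵇ ℂ} (hf : f ∈ trigPoly) (n : ℕ) : f ^ n ∈ trigPoly := by
  induction n with
  | zero => simpa using one_mem_trigPoly
  | succ n ih => rw [pow_succ]; exact mul_mem_trigPoly ih hf

/-- average over `[-T, T]` -/
def avg (T : ℝ) (g : ℝ →ᵇ ℂ) : ℂ := (2 * T)⁻¹ • ∫ x in (-T)..T, g x

theorem intervalIntegrable_bcf (g : ℝ →ᵇ ℂ) (a b : ℝ) :
    IntervalIntegrable g MeasureTheory.volume a b := g.continuous.intervalIntegrable a b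

theorem avg_add (T : ℝ) (f g : ℝ →ᵇ ℂ) : avg T (f + g) = avg T f + avg T g := by
  simp only [avg, BoundedContinuousFunction.coe_add, Pi.add_apply]
  rw [intervalIntegral.integral_add (intervalIntegrable_bcf f _ _) (intervalIntegrable_bcf g _ _),
    smul_add]

theorem avg_smul (T : ℝ) (c : ℂ) (f : ℝ →ᵇ ℂ) : avg T (c • f) = c * avg T f := by
  simp only [avg, BoundedContinuousFunction.coe_smul, smul_eq_mul]
  rw [intervalIntegral.integral_const_mul, mul_smul_comm]

theorem avg_sub (T : ℝ) (f g : ℝ →ᵇ ℂ) : avg T (f - g) = avg T f - avg T g := by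
  have := avg_add T (f - g) g
  rw [sub_add_cancel] at this
  rw [this, add_sub_cancel_right]

theorem avg_one {T : ℝ} (hT : 0 < T) : avg T 1 = 1 := by
  simp only [avg, BoundedContinuousFunction.coe_one, Pi.one_apply]
  rw [intervalIntegral.integral_const, smul_smul, show (2 * T)⁻¹ * (T - -T) = 1 by field_simp; ring,
    one_smul]

theorem norm_avg_le_of_norm_le_re {T : ℝ} (hT : 0 < T) {g h : ℝ →ᵇ ℂ}
    (hgh : ∀ y, ‖g y‖ ≤ (h y).re) : ‖avg T g‖ ≤ (avg T h).re := by
  have h1 : (avg T h).re = (2 * T)⁻¹ * ∫ x in (-T)..T, (h x).re := by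
    have := Complex.reCLM.intervalIntegral_comp_comm (intervalIntegrable_bcf h (-T) T)
    simp only [Complex.reCLM_apply] at this
    rw [this, avg, Complex.smul_re, smul_eq_mul]
  have hc : Continuous fun x => (h x).re := Complex.continuous_re.comp h.continuous
  rw [h1, avg, norm_smul, Real.norm_of_nonneg (by positivity)]
  gcongr
  exact intervalIntegral.norm_integral_le_of_norm_le (by linarith)
    (Filter.Eventually.of_forall fun x _ => hgh x) (hc.intervalIntegrable _ _)

theorem norm_avg_le {T : ℝ} (hT : 0 < T) (g : ℝ →ᵇ ℂ) : ‖avg T g‖ ≤ ‖g‖ := by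
  have := norm_avg_le_of_norm_le_re hT (g := g) (h := (‖g‖ : ℂ) • 1) fun y => by
    simpa using g.norm_coe_le_norm y
  rwa [avg_smul, avg_one hT, mul_one, Complex.ofReal_re] at this

theorem tendsto_avg_translateR_sub_avg (g : ℝ →ᵇ ℂ) (x : ℝ) :
    Tendsto (fun T => avg T (translateR g x) - avg T g) atTop (𝓝 0) := by
  have hlim : Tendsto (fun T : ℝ => (2 * |x| * ‖g‖) * (2 * T)⁻¹) atTop (𝓝 0) := by
    have h1 : Tendsto (fun T : ℝ => 2 * T) atTop atTop :=
      tendsto_id.const_mul_atTop (by norm_num)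
    simpa using h1.inv_tendsto_atTop.const_mul (2 * |x| * ‖g‖)
  refine squeeze_zero_norm' ?_ hlim
  filter_upwards [eventually_gt_atTop 0] with T hT
  have h1 : ∫ y in (-T)..T, translateR g x y = ∫ y in (-T + x)..(T + x), g y :=
    intervalIntegral.integral_comp_add_right (fun y => g y) x
  have hb : ∀ a b, ‖∫ y in a..b, g y‖ ≤ ‖g‖ * |b - a| := fun a b =>
    intervalIntegral.norm_integral_le_of_norm_le_const fun y _ => g.norm_coe_le_norm y
  have hi := fun a b => intervalIntegrable_bcf g a b
  have h2 : (∫ y in (-T + x)..(T + x), g y) - ∫ y in (-T)..T, g y =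
      (∫ y in (T)..(T + x), g y) - ∫ y in (-T)..(-T + x), g y := by
    rw [← intervalIntegral.integral_add_adjacent_intervals (hi (-T + x) (-T)) (hi (-T) (T + x)),
      ← intervalIntegral.integral_add_adjacent_intervals (hi (-T) T) (hi T (T + x)),
      intervalIntegral.integral_symm (-T) (-T + x)]
    ring
  rw [avg, avg, ← smul_sub, h1, h2, norm_smul, Real.norm_of_nonneg (by positivity), mul_comm]
  gcongr
  refine (norm_sub_le _ _).trans ?_
  have h3 := hb T (T + x)
  have h4 := hb (-T) (-T + x)
  rw [add_sub_cancel_left] at h3 h4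
  linarith

/-- limit of the averages over `[-T, T]` along an ultrafilter -/
def ultraMeanFun (g : ℝ →ᵇ ℂ) : ℂ :=
  limUnder (Ultrafilter.of (atTop : Filter ℝ) : Filter ℝ) fun T => avg T g

theorem tendsto_ultraMeanFun (g : ℝ →ᵇ ℂ) :
    Tendsto (fun T => avg T g) (Ultrafilter.of (atTop : Filter ℝ) : Filter ℝ)
      (𝓝 (ultraMeanFun g)) := by
  apply tendsto_nhds_limUnder
  obtain ⟨z, -, hz⟩ := (isCompact_closedBall (0 : ℂ) ‖g‖).ultrafilter_le_nhds
    ((Ultrafilter.of (atTop : Filter ℝ)).map fun T => avg T g) (by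
      rw [le_principal_iff]
      refine Ultrafilter.of_le (atTop : Filter ℝ) ?_
      filter_upwards [eventually_gt_atTop 0] with T hT
      simpa using norm_avg_le hT g)
  exact ⟨z, hz⟩

theorem ultraMeanFun_eq_of_tendsto {g : ℝ →ᵇ ℂ} {z : ℂ}
    (h : Tendsto (fun T => avg T g) atTop (𝓝 z)) : ultraMeanFun g = z :=
  tendsto_nhds_unique (tendsto_ultraMeanFun g) (h.mono_left (Ultrafilter.of_le _))

theorem norm_ultraMeanFun_le_of_norm_le_re {g h : ℝ →ᵇ ℂ} (hgh : ∀ y, ‖g y‖ ≤ (h y).re) :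
    ‖ultraMeanFun g‖ ≤ (ultraMeanFun h).re := by
  refine le_of_tendsto_of_tendsto (tendsto_ultraMeanFun g).norm
    ((Complex.continuous_re.tendsto _).comp (tendsto_ultraMeanFun h)) ?_
  exact Ultrafilter.of_le (atTop : Filter ℝ)
    ((eventually_gt_atTop 0).mono fun T hT => norm_avg_le_of_norm_le_re hT hgh)

theorem norm_ultraMeanFun_le (g : ℝ →ᵇ ℂ) : ‖ultraMeanFun g‖ ≤ ‖g‖ :=
  le_of_tendsto (tendsto_ultraMeanFun g).norm <| Ultrafilter.of_le (atTop : Filter ℝ)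
    ((eventually_gt_atTop 0).mono fun _ hT => norm_avg_le hT g)

/-- translation invariant mean on bounded continuous functions -/
def ultraMean : (ℝ →ᵇ ℂ) →L[ℂ] ℂ :=
  LinearMap.mkContinuous
    { toFun := ultraMeanFun
      map_add' := fun f g => tendsto_nhds_unique (tendsto_ultraMeanFun (f + g)) <| by
        simpa only [avg_add] using (tendsto_ultraMeanFun f).add (tendsto_ultraMeanFun g)
      map_smul' := fun c f => tendsto_nhds_unique (tendsto_ultraMeanFun (c • f)) <| by
        simpa only [avg_smul, RingHom.id_apply, smul_eq_mul] using
          (tendsto_ultraMeanFun f).const_mul c }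
    1 fun f => by simpa using norm_ultraMeanFun_le f

theorem ultraMean_apply (g : ℝ →ᵇ ℂ) : ultraMean g = ultraMeanFun g := rfl

theorem norm_ultraMean_le_of_norm_le_re {g h : ℝ →ᵇ ℂ} (hgh : ∀ y, ‖g y‖ ≤ (h y).re) :
    ‖ultraMean g‖ ≤ (ultraMean h).re := norm_ultraMeanFun_le_of_norm_le_re hgh

theorem ultraMean_one : ultraMean 1 = 1 :=
  ultraMeanFun_eq_of_tendsto <| tendsto_const_nhds.congr' <|
    (eventually_gt_atTop 0).mono fun _ hT => (avg_one hT).symm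

theorem ultraMean_translateR (g : ℝ →ᵇ ℂ) (x : ℝ) :
    ultraMean (translateR g x) = ultraMean g := by
  rw [← sub_eq_zero]
  exact tendsto_nhds_unique ((tendsto_ultraMeanFun _).sub (tendsto_ultraMeanFun _))
    ((tendsto_avg_translateR_sub_avg g x).mono_left (Ultrafilter.of_le _))

theorem ofReal_re_ultraMean {h : ℝ →ᵇ ℂ} (hh : ∀ y, ‖h y‖ ≤ (h y).re) :
    ((ultraMean h).re : ℂ) = ultraMean h := by
  have h1 := norm_ultraMean_le_of_norm_le_re hh
  have h2 := Complex.sq_norm (ultraMean h)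
  rw [Complex.normSq_apply] at h2
  have h3 : (ultraMean h).im = 0 := by
    have : ‖ultraMean h‖ ^ 2 ≤ (ultraMean h).re ^ 2 := by gcongr
    have : (ultraMean h).im ^ 2 ≤ 0 := by nlinarith
    exact pow_eq_zero_iff (two_ne_zero) |>.1 (le_antisymm this (sq_nonneg _))
  apply Complex.ext <;> simp [h3]

theorem translateR_apply (f : ℝ →ᵇ ℂ) (x y : ℝ) : translateR f x y = f (y + x) := rfl

theorem translateR_expBCF (l x : ℝ) : translateR (expBCF l) x = expBCF l x • expBCF l := by
  ext y
  rw [translateR_apply, expBCF_apply_add, mul_comm]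
  rfl

theorem tendsto_avg_expBCF {l : ℝ} (hl : l ≠ 0) :
    Tendsto (fun T => avg T (expBCF l)) atTop (𝓝 0) := by
  have h := (tendsto_avg_translateR_sub_avg (expBCF l) (Real.pi / l)).const_mul (-1 / 2 : ℂ)
  have h1 : expBCF l (Real.pi / l) = -1 := by
    rw [expBCF_apply, mul_div_cancel₀ _ hl, mul_comm, Complex.exp_pi_mul_I]
  simp_rw [translateR_expBCF, avg_smul, h1] at h
  rw [mul_zero] at h
  refine h.congr fun T => ?_
  ring

theorem tendsto_avg_of_mem_closure_trigPoly {g : ℝ →ᵇ ℂ} (hg : g ∈ trigPoly.topologicalClosure) :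
    Tendsto (fun T => avg T g) atTop (𝓝 (ultraMean g)) := by
  have hpoly : ∀ p ∈ trigPoly, Tendsto (fun T => avg T p) atTop (𝓝 (ultraMean p)) := by
    intro p hp
    suffices ∃ z, Tendsto (fun T => avg T p) atTop (𝓝 z) by
      obtain ⟨z, hz⟩ := this
      rwa [ultraMean_apply, ultraMeanFun_eq_of_tendsto hz]
    induction hp using Submodule.span_induction with
    | mem p hp =>
      obtain ⟨l, rfl⟩ := hp
      by_cases hl : l = 0
      · subst hl
        rw [expBCF_zero]
        exact ⟨1, tendsto_const_nhds.congr' <|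
          (eventually_gt_atTop 0).mono fun _ hT => (avg_one hT).symm⟩
      · exact ⟨0, tendsto_avg_expBCF hl⟩
    | zero => exact ⟨0, by simp [avg]⟩
    | add p q _ _ hp hq =>
      obtain ⟨z, hz⟩ := hp
      obtain ⟨w, hw⟩ := hq
      exact ⟨z + w, by simpa only [avg_add] using hz.add hw⟩
    | smul c p _ hp =>
      obtain ⟨z, hz⟩ := hp
      exact ⟨c * z, by simpa only [avg_smul] using hz.const_mul c⟩
  rw [Metric.tendsto_nhds]
  intro ε hε
  obtain ⟨p, hp, hgp⟩ := Metric.mem_closure_iff.1 hg (ε / 3) (by positivity)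
  rw [dist_eq_norm] at hgp
  filter_upwards [Metric.tendsto_nhds.1 (hpoly p hp) (ε / 3) (by positivity),
    eventually_gt_atTop 0] with T hT hT0
  have h1 : dist (avg T g) (avg T p) ≤ ‖g - p‖ := by
    rw [dist_eq_norm, ← avg_sub]
    exact norm_avg_le hT0 _
  have h2 : dist (ultraMean p) (ultraMean g) ≤ ‖g - p‖ := by
    rw [dist_comm, dist_eq_norm, ← map_sub]
    exact norm_ultraMeanFun_le _
  linarith [dist_triangle4 (avg T g) (avg T p) (ultraMean p) (ultraMean g)]

theorem exists_convolution_operator {K : ℝ →ᵇ ℂ} (hK : K ∈ trigPoly) :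
    ∃ T : (ℝ →ᵇ ℂ) →L[ℂ] (ℝ →ᵇ ℂ),
      FiniteDimensional ℂ (LinearMap.range (T : (ℝ →ᵇ ℂ) →ₗ[ℂ] (ℝ →ᵇ ℂ))) ∧
      (∀ f x, T f x = ultraMean (translateR f x * K)) ∧
      ∀ (Γ : Set ℝ) (f : ℝ →ᵇ ℂ), (∀ l ∉ Γ, ultraMean (expBCF (-l) * f) = 0) →
        T f ∈ Submodule.span ℂ (expBCF '' Γ) := by
  induction hK using Submodule.span_induction with
  | mem p hp =>
    obtain ⟨l, rfl⟩ := hp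
    refine ⟨(ultraMean.comp (ContinuousLinearMap.mul ℂ (ℝ →ᵇ ℂ) (expBCF l))).smulRight
      (expBCF (-l)), ?_, fun f x => ?_, fun Γ f hf => ?_⟩
    · refine Submodule.finiteDimensional_of_le (S₂ := Submodule.span ℂ {expBCF (-l)}) ?_
      rintro _ ⟨f, rfl⟩
      exact Submodule.smul_mem _ _ (Submodule.mem_span_singleton_self _)
    · have h1 : translateR f x * expBCF l = expBCF (-l) x • translateR (expBCF l * f) x := by
        ext y
        simp only [BoundedContinuousFunction.coe_mul, Pi.mul_apply, translateR_apply,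
          BoundedContinuousFunction.coe_smul, smul_eq_mul, expBCF_apply_add]
        linear_combination (-f (y + x) * expBCF l y) * expBCF_neg_mul_apply l x
      rw [h1, map_smul, ultraMean_translateR]
      simp [mul_comm]
    · change ultraMean (expBCF l * f) • expBCF (-l) ∈ _
      by_cases hl : -l ∈ Γ
      · exact Submodule.smul_mem _ _ (Submodule.subset_span ⟨-l, hl, rfl⟩)
      · have := hf _ hl
        rw [neg_neg] at this
        rw [this, zero_smul]
        exact Submodule.zero_mem _
  | zero =>
    refine ⟨0, ?_, fun f x => by simp, fun Γ f _ => by simp⟩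
    refine Submodule.finiteDimensional_of_le (S₂ := ⊥) ?_
    rintro _ ⟨f, rfl⟩
    simp
  | add p q _ _ hp hq =>
    obtain ⟨T, hT, hT', hT''⟩ := hp
    obtain ⟨S, hS, hS', hS''⟩ := hq
    refine ⟨T + S, ?_, fun f x => ?_, fun Γ f hf => ?_⟩
    · refine Submodule.finiteDimensional_of_le
        (S₂ := LinearMap.range (T : (ℝ →ᵇ ℂ) →ₗ[ℂ] (ℝ →ᵇ ℂ)) ⊔
          LinearMap.range (S : (ℝ →ᵇ ℂ) →ₗ[ℂ] (ℝ →ᵇ ℂ))) ?_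
      rintro _ ⟨f, rfl⟩
      exact Submodule.add_mem_sup ⟨f, rfl⟩ ⟨f, rfl⟩
    · rw [mul_add, map_add, ← hT', ← hS']
      rfl
    · exact Submodule.add_mem _ (hT'' Γ f hf) (hS'' Γ f hf)
  | smul c p _ hp =>
    obtain ⟨T, hT, hT', hT''⟩ := hp
    refine ⟨c • T, ?_, fun f x => ?_, fun Γ f hf => ?_⟩
    · refine Submodule.finiteDimensional_of_le
        (S₂ := LinearMap.range (T : (ℝ →ᵇ ℂ) →ₗ[ℂ] (ℝ →ᵇ ℂ))) ?_
      rintro _ ⟨f, rfl⟩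
      exact Submodule.smul_mem _ _ ⟨f, rfl⟩
    · rw [mul_smul_comm, map_smul, ← hT']
      rfl
    · exact Submodule.smul_mem _ _ (hT'' Γ f hf)

theorem normSq_expBCF_sub_one (l y : ℝ) :
    ((‖expBCF l y - 1‖ ^ 2 : ℝ) : ℂ) = 2 - expBCF l y - expBCF (-l) y := by
  rw [← Complex.normSq_eq_norm_sq, Complex.normSq_eq_conj_mul_self, map_sub, map_one,
    ← expBCF_neg_apply]
  linear_combination expBCF_neg_mul_apply l y

theorem exists_finset_expBCF_sub_close (Λ : Finset ℝ) {ρ : ℝ} (hρ : 0 < ρ) :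
    ∃ F : Finset ℝ, ∀ y, ∃ t ∈ F, ∀ l ∈ Λ, ‖expBCF l (y - t) - 1‖ < ρ := by
  classical
  let Ψ : ℝ → Λ → ℂ := fun y l => expBCF l y
  have htb : TotallyBounded (Set.range Ψ) := by
    refine (isCompact_closedBall (0 : Λ → ℂ) 1).totallyBounded.subset ?_
    rintro _ ⟨y, rfl⟩
    rw [mem_closedBall_zero_iff]
    exact (pi_norm_le_iff_of_nonneg zero_le_one).2 fun l => (norm_expBCF_apply _ _).le
  obtain ⟨t, ht, htfin, hcov⟩ := Metric.finite_approx_of_totallyBounded htb ρ hρ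
  refine ⟨htfin.toFinset.image (Function.invFun Ψ), fun y => ?_⟩
  have := hcov (Set.mem_range_self y)
  simp only [Set.mem_iUnion, Metric.mem_ball] at this
  obtain ⟨z, hz, hd⟩ := this
  refine ⟨_, Finset.mem_image_of_mem _ (htfin.mem_toFinset.2 hz), fun l hl => ?_⟩
  set t₀ := Function.invFun Ψ z
  have hzt : Ψ t₀ = z := Function.invFun_eq (ht hz)
  rw [← hzt] at hd
  have h1 : dist (Ψ y ⟨l, hl⟩) (Ψ t₀ ⟨l, hl⟩) < ρ := (dist_le_pi_dist _ _ _).trans_lt hd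
  rw [dist_eq_norm] at h1
  change ‖expBCF l y - expBCF l t₀‖ < ρ at h1
  have h2 : expBCF l y - expBCF l t₀ = expBCF l t₀ * (expBCF l (y - t₀) - 1) := by
    have := expBCF_apply_add l t₀ (y - t₀)
    rw [add_sub_cancel] at this
    rw [this]
    ring
  rwa [h2, norm_mul, norm_expBCF_apply, one_mul] at h1

theorem exists_trigPoly_kernel (Λ : Finset ℝ) {δ η : ℝ} (hδ : 0 < δ) (hη : 0 < η) :
    ∃ K ∈ trigPoly, (∀ y, ‖K y‖ = (K y).re) ∧ ultraMean K = 1 ∧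
      ∀ y, (∃ l ∈ Λ, δ ≤ ‖expBCF l y - 1‖) → ‖K y‖ ≤ η := by
  let J : ℝ := Λ.card
  have hJ : 0 ≤ J := Nat.cast_nonneg _
  let σ : ℝ → ℝ := fun y => ∑ l ∈ Λ, ‖expBCF l y - 1‖ ^ 2
  have hσ0 : ∀ y, 0 ≤ σ y := fun y => Finset.sum_nonneg fun _ _ => by positivity
  have hσle : ∀ y ρ, (∀ l ∈ Λ, ‖expBCF l y - 1‖ ≤ ρ) → σ y ≤ J * ρ ^ 2 := fun y ρ h => by
    have := Finset.sum_le_card_nsmul Λ (fun l => ‖expBCF l y - 1‖ ^ 2) (ρ ^ 2) fun l hl => by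
      have := h l hl
      gcongr
    rwa [nsmul_eq_mul] at this
  have hσ4 : ∀ y, σ y ≤ J * 2 ^ 2 := fun y => hσle y 2 fun l _ => by
    refine (norm_sub_le _ _).trans ?_
    rw [norm_expBCF_apply, norm_one]
    norm_num
  let C : ℝ := J * 2 ^ 2 + δ ^ 2
  have hC : 0 < C := by positivity
  let P : ℝ → ℝ := fun y => 1 - σ y / C
  let p : ℝ →ᵇ ℂ := 1 - (C⁻¹ : ℂ) • ∑ l ∈ Λ, ((2 : ℂ) • 1 - expBCF l - expBCF (-l))
  have hp : p ∈ trigPoly :=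
    sub_mem one_mem_trigPoly <| Submodule.smul_mem _ _ <| Submodule.sum_mem _ fun l _ =>
      sub_mem (sub_mem (Submodule.smul_mem _ _ one_mem_trigPoly) (expBCF_mem_trigPoly _))
        (expBCF_mem_trigPoly _)
  have hpP : ∀ y, p y = (P y : ℂ) := fun y => by
    simp only [p, P, σ, BoundedContinuousFunction.coe_sub, BoundedContinuousFunction.coe_one,
      BoundedContinuousFunction.coe_smul, BoundedContinuousFunction.coe_sum, Pi.sub_apply,
      Pi.one_apply, Finset.sum_apply, smul_eq_mul, mul_one, Complex.ofReal_sub, Complex.ofReal_one,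
      Complex.ofReal_div, Complex.ofReal_sum, normSq_expBCF_sub_one]
    rw [div_eq_inv_mul]
  have hP0 : ∀ y, 0 ≤ P y := fun y => by
    have h1 : σ y / C ≤ 1 := (div_le_one hC).2 ((hσ4 y).trans (by simp only [C]; nlinarith))
    simp only [P]
    linarith
  have hpow : ∀ (N : ℕ) y, (p ^ N) y = ((P y ^ N : ℝ) : ℂ) := fun N y => by
    rw [BoundedContinuousFunction.coe_pow, Pi.pow_apply, hpP, Complex.ofReal_pow]
  have hpos : ∀ (N : ℕ) y, ‖(p ^ N) y‖ = ((p ^ N) y).re := fun N y => by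
    rw [hpow, Complex.norm_real, Complex.ofReal_re, Real.norm_of_nonneg (pow_nonneg (hP0 y) N)]
  let q : ℝ := 1 - δ ^ 2 / 2 / C
  let r : ℝ := 1 - δ ^ 2 / C
  have hδC : δ ^ 2 / C ≤ 1 := (div_le_one hC).2 (by simp only [C]; nlinarith)
  have hδC' : 0 < δ ^ 2 / C := by positivity
  have hq2 : δ ^ 2 / 2 / C = δ ^ 2 / C / 2 := by ring
  have hr0 : 0 ≤ r := by simp only [r]; linarith
  have hrq : r < q := by simp only [r, q]; linarith
  have hq0 : 0 < q := hr0.trans_lt hrq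
  obtain ⟨F, hF⟩ := exists_finset_expBCF_sub_close Λ
    (ρ := Real.sqrt (δ ^ 2 / 2 / (J + 1))) (by positivity)
  have hFP : ∀ y, ∃ t ∈ F, q ≤ P (y - t) := fun y => by
    obtain ⟨t, ht, h⟩ := hF y
    refine ⟨t, ht, ?_⟩
    have h1 := hσle (y - t) _ fun l hl => (h l hl).le
    rw [Real.sq_sqrt (by positivity)] at h1
    have h2 : J * (δ ^ 2 / 2 / (J + 1)) ≤ δ ^ 2 / 2 := by
      rw [mul_div_assoc', div_le_iff₀ (by positivity)]
      nlinarith [sq_nonneg δ]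
    simp only [q, P]
    gcongr
    exact h1.trans h2
  have hm : (0 : ℝ) < F.card := by
    obtain ⟨t, ht, -⟩ := hFP 0
    exact_mod_cast Finset.card_pos.2 ⟨t, ht⟩
  have hlow : ∀ N : ℕ, q ^ N ≤ F.card * (ultraMean (p ^ N)).re := fun N => by
    have h1 := norm_ultraMean_le_of_norm_le_re (g := ((q ^ N : ℝ) : ℂ) • 1)
      (h := ∑ t ∈ F, translateR (p ^ N) (-t)) fun y => by
        obtain ⟨t, ht, hqt⟩ := hFP y
        simp only [BoundedContinuousFunction.coe_smul, BoundedContinuousFunction.coe_one,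
          Pi.one_apply, smul_eq_mul, mul_one, Complex.norm_real, BoundedContinuousFunction.coe_sum,
          Finset.sum_apply, Complex.re_sum, translateR_apply, hpow, Complex.ofReal_re]
        rw [Real.norm_of_nonneg (by positivity)]
        refine le_trans ?_ (Finset.single_le_sum
          (f := fun t => P (y + -t) ^ N) (fun s _ => pow_nonneg (hP0 _) N) ht)
        have : P (y + -t) = P (y - t) := by rw [sub_eq_add_neg]
        simp only [this]
        gcongr
    rw [map_smul, ultraMean_one, map_sum] at h1
    simp only [ultraMean_translateR, Finset.sum_const, nsmul_eq_mul, smul_eq_mul, mul_one,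
      Complex.norm_real] at h1
    rw [Real.norm_of_nonneg (by positivity)] at h1
    simpa using h1
  obtain ⟨N, hN⟩ := exists_pow_lt_of_lt_one (show 0 < η / F.card by positivity)
    ((div_lt_one hq0).2 hrq)
  set A : ℝ := (ultraMean (p ^ N)).re
  have hApos : 0 < A := by
    have := (pow_pos hq0 N).trans_le (hlow N)
    exact pos_of_mul_pos_right this hm.le
  have hAeq : (A : ℂ) = ultraMean (p ^ N) := ofReal_re_ultraMean fun y => (hpos N y).le
  have hK : ∀ y, (((A⁻¹ : ℝ) : ℂ) • p ^ N) y = ((A⁻¹ * P y ^ N : ℝ) : ℂ) := fun y => by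
    simp only [BoundedContinuousFunction.coe_smul, hpow, smul_eq_mul, Complex.ofReal_mul]
  have hKnn : ∀ y, 0 ≤ A⁻¹ * P y ^ N := fun y =>
    mul_nonneg (inv_nonneg.2 hApos.le) (pow_nonneg (hP0 y) N)
  refine ⟨((A⁻¹ : ℝ) : ℂ) • p ^ N, Submodule.smul_mem _ _ (pow_mem_trigPoly hp N), fun y => ?_, ?_,
    fun y hy => ?_⟩
  · rw [hK, Complex.norm_real, Complex.ofReal_re, Real.norm_of_nonneg (hKnn y)]
  · rw [map_smul, ← hAeq, smul_eq_mul, ← Complex.ofReal_mul, inv_mul_cancel₀ hApos.ne',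
      Complex.ofReal_one]
  · rw [hK, Complex.norm_real, Real.norm_of_nonneg (hKnn y)]
    obtain ⟨l, hl, hδl⟩ := hy
    have h1 : δ ^ 2 ≤ σ y := by
      refine le_trans ?_ (Finset.single_le_sum (f := fun l => ‖expBCF l y - 1‖ ^ 2)
        (fun _ _ => by positivity) hl)
      gcongr
    have h2 : P y ^ N ≤ r ^ N := by
      refine pow_le_pow_left₀ (hP0 y) ?_ N
      simp only [P, r]
      gcongr
    rw [div_pow, div_lt_div_iff₀ (by positivity) hm] at hN
    rw [inv_mul_le_iff₀ hApos]
    have h3 : η * q ^ N ≤ η * (F.card * A) := by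
      gcongr
      exact hlow N
    have h4 : r ^ N * F.card ≤ (A * η) * F.card := by nlinarith
    exact h2.trans (le_of_mul_le_mul_right h4 hm)

theorem translateR_zero (f : ℝ →ᵇ ℂ) : translateR f 0 = f := by
  ext y
  rw [translateR_apply, add_zero]

theorem dist_translateR_add (f : ℝ →ᵇ ℂ) (x y z : ℝ) :
    dist (translateR f (x + z)) (translateR f (y + z)) = dist (translateR f x) (translateR f y) := by
  have key : ∀ x y z : ℝ, dist (translateR f (x + z)) (translateR f (y + z)) ≤
      dist (translateR f x) (translateR f y) := fun x y z => by
    rw [BoundedContinuousFunction.dist_le dist_nonneg]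
    intro w
    have h := BoundedContinuousFunction.dist_coe_le_dist (f := translateR f x)
      (g := translateR f y) (w + z)
    simp only [translateR_apply] at h ⊢
    convert h using 3 <;> ring
  refine le_antisymm (key x y z) ?_
  simpa using key (x + z) (y + z) (-z)

theorem IsAP.continuousAt_translateR {f : ℝ →ᵇ ℂ} (hf : IsAP f) :
    ContinuousAt (translateR f) 0 := by
  rw [ContinuousAt, translateR_zero]
  refine hf.le_nhds_of_unique_clusterPt ?_ fun g _ hg => ?_
  · exact mem_map.2 (univ_mem' fun y => subset_closure ⟨y, rfl⟩)
  · ext x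
    have h1 : Tendsto (fun h : ℝ →ᵇ ℂ => h x) (map (translateR f) (𝓝 0)) (𝓝 (f x)) := by
      rw [tendsto_map'_iff]
      have : Continuous fun y => f (x + y) := by fun_prop
      have h := this.tendsto 0
      rw [add_zero] at h
      exact h
    have h2 : ClusterPt (g x) (map (fun h : ℝ →ᵇ ℂ => h x) (map (translateR f) (𝓝 0))) :=
      hg.map (BoundedContinuousFunction.evalCLM ℂ x).continuous.continuousAt tendsto_map
    exact eq_of_nhds_neBot (h2.mono h1)

theorem norm_ultraMean_translateR_mul_le (f : ℝ →ᵇ ℂ) {K : ℝ →ᵇ ℂ}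
    (hK : ∀ y, ‖K y‖ = (K y).re) (hK1 : ultraMean K = 1) (x : ℝ) :
    ‖ultraMean (translateR f x * K)‖ ≤ ‖f‖ := by
  have h := norm_ultraMean_le_of_norm_le_re (g := translateR f x * K) (h := (‖f‖ : ℂ) • K)
    fun y => by
      simp only [BoundedContinuousFunction.coe_mul, Pi.mul_apply, translateR_apply,
        BoundedContinuousFunction.coe_smul, smul_eq_mul, Complex.re_ofReal_mul, norm_mul, hK]
      exact mul_le_mul_of_nonneg_right (f.norm_coe_le_norm _) (hK y ▸ norm_nonneg _)
  simpa [hK1] using h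

theorem exists_kernel_approximating (S : Finset (ℝ →ᵇ ℂ)) (hS : ∀ f ∈ S, IsAP f) {ε : ℝ}
    (hε : 0 < ε) :
    ∃ K ∈ trigPoly, (∀ y, ‖K y‖ = (K y).re) ∧ ultraMean K = 1 ∧
      ∀ f ∈ S, ∀ x, ‖ultraMean (translateR f x * K) - f x‖ ≤ ε := by
  let Φ : ℝ → S → (ℝ →ᵇ ℂ) := fun y f => translateR f y
  obtain ⟨Λ, δ, hδ, hΛ⟩ := exists_bohr_set_subset Φ
    (fun x y z => by simp only [Φ, dist_pi_def, nndist_dist, dist_translateR_add])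
    (continuousAt_pi.2 fun f => (hS f f.2).continuousAt_translateR)
    ((isCompact_univ_pi fun f : S => hS f f.2).totallyBounded.subset <| by
      rintro _ ⟨y, rfl⟩ f -
      exact subset_closure ⟨y, rfl⟩) (ε := ε / 2) (by positivity)
  let R : ℝ := ∑ f ∈ S, ‖f‖
  have hR : 0 ≤ R := Finset.sum_nonneg fun _ _ => norm_nonneg _
  obtain ⟨K, hK, hKpos, hK1, hKoff⟩ := exists_trigPoly_kernel Λ hδ
    (η := ε / 2 / (2 * R + 1)) (by positivity)
  refine ⟨K, hK, hKpos, hK1, fun f hf x => ?_⟩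
  have hfR : ‖f‖ ≤ R := Finset.single_le_sum (f := fun f : ℝ →ᵇ ℂ => ‖f‖)
    (fun _ _ => norm_nonneg _) hf
  have hsub : ultraMean (translateR f x * K) - f x =
      ultraMean (translateR f x * K - f x • K) := by
    rw [map_sub, map_smul, hK1, smul_eq_mul, mul_one]
  rw [hsub]
  have h := norm_ultraMean_le_of_norm_le_re (g := translateR f x * K - f x • K)
    (h := ((ε / 2 : ℝ) : ℂ) • K + ((ε / 2 : ℝ) : ℂ) • 1) fun y => by
      simp only [BoundedContinuousFunction.coe_sub, BoundedContinuousFunction.coe_mul, Pi.sub_apply,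
        Pi.mul_apply, translateR_apply, BoundedContinuousFunction.coe_smul,
        BoundedContinuousFunction.coe_add, Pi.add_apply, BoundedContinuousFunction.coe_one,
        Pi.one_apply, smul_eq_mul, mul_one, Complex.add_re, Complex.re_ofReal_mul,
        Complex.ofReal_re, ← hKpos]
      rw [← sub_mul, norm_mul]
      by_cases hy : ∃ l ∈ Λ, δ ≤ ‖expBCF l y - 1‖
      · have h1 := hKoff y hy
        have h2 : ‖f (y + x) - f x‖ ≤ 2 * R + 1 := by
          have := norm_sub_le (f (y + x)) (f x)
          have := f.norm_coe_le_norm (y + x)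
          have := f.norm_coe_le_norm x
          linarith
        have h3 : ‖f (y + x) - f x‖ * ‖K y‖ ≤ (2 * R + 1) * (ε / 2 / (2 * R + 1)) := by gcongr
        rw [mul_div_cancel₀ _ (by positivity)] at h3
        have : 0 ≤ ε / 2 * ‖K y‖ := by positivity
        linarith
      · push Not at hy
        have h1 := (dist_le_pi_dist (Φ y) (Φ 0) ⟨f, hf⟩).trans (hΛ y hy).le
        have h2 := (BoundedContinuousFunction.dist_coe_le_dist (f := translateR f y)
          (g := translateR f 0) x).trans h1
        rw [translateR_apply, translateR_apply, add_zero, add_comm x y, dist_eq_norm] at h2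
        have : ‖f (y + x) - f x‖ * ‖K y‖ ≤ ε / 2 * ‖K y‖ := by gcongr
        linarith
  rw [map_add, map_smul, map_smul, hK1, ultraMean_one, smul_eq_mul, mul_one, ← Complex.ofReal_add,
    Complex.ofReal_re, add_halves] at h
  exact h

theorem IsAP.mem_closure_trigPoly {f : ℝ →ᵇ ℂ} (hf : IsAP f) :
    f ∈ trigPoly.topologicalClosure := by
  refine Metric.mem_closure_iff.2 fun ε hε => ?_
  obtain ⟨K, hK, -, -, hKf⟩ := exists_kernel_approximating {f} (by simpa using hf) (half_pos hε)
  obtain ⟨T, -, hT, hTspan⟩ := exists_convolution_operator hK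
  refine ⟨T f, by simpa using hTspan Set.univ f (by simp), ?_⟩
  rw [dist_comm]
  refine lt_of_le_of_lt ?_ (half_lt_self hε)
  rw [BoundedContinuousFunction.dist_le (half_pos hε).le]
  intro x
  rw [dist_eq_norm, hT]
  exact hKf f (Finset.mem_singleton_self f) x

theorem IsAP.bohrCoeffR_eq {f : ℝ →ᵇ ℂ} (hf : IsAP f) (l : ℝ) :
    bohrCoeffR f l = ultraMean (expBCF (-l) * f) := by
  have hmem : expBCF (-l) * f ∈ trigPoly.topologicalClosure := by
    have hc : Continuous fun g : ℝ →ᵇ ℂ => expBCF (-l) * g := continuous_const.mul continuous_id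
    exact map_mem_closure hc hf.mem_closure_trigPoly fun g hg =>
      mul_mem_trigPoly (expBCF_mem_trigPoly _) hg
  refine Tendsto.limUnder_eq ((tendsto_avg_of_mem_closure_trigPoly hmem).congr fun T => ?_)
  simp only [avg, BoundedContinuousFunction.coe_mul, Pi.mul_apply, expBCF_apply, smul_eq_mul]
  congr 2
  ext x
  congr 2
  push_cast
  ring

theorem isAP_expBCF (l : ℝ) : IsAP (expBCF l) := by
  have hc : Continuous fun z : ℂ => z • expBCF l := continuous_id.smul continuous_const
  refine ((isCompact_closedBall (0 : ℂ) 1).image hc).closure_of_subset ?_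
  rintro _ ⟨x, rfl⟩
  exact ⟨expBCF l x, by simp [norm_expBCF_apply], (translateR_expBCF l x).symm⟩

theorem expBCF_mem_APset {Γ : Set ℝ} {l : ℝ} (hl : l ∈ Γ) : expBCF l ∈ APset Γ := by
  refine ⟨isAP_expBCF l, fun m hm => ?_⟩
  by_contra hmΓ
  have hne : -m + l ≠ 0 := fun h => hmΓ (by rwa [show m = l by linarith])
  refine hm ?_
  rw [(isAP_expBCF l).bohrCoeffR_eq, ← expBCF_add]
  exact ultraMeanFun_eq_of_tendsto (tendsto_avg_expBCF hne)

theorem exists_finiteRank_contraction (S : Finset (ℝ →ᵇ ℂ)) (hS : ∀ f ∈ S, IsAP f) {ε : ℝ}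
    (hε : 0 < ε) :
    ∃ T : (ℝ →ᵇ ℂ) →L[ℂ] (ℝ →ᵇ ℂ),
      FiniteDimensional ℂ (LinearMap.range (T : (ℝ →ᵇ ℂ) →ₗ[ℂ] (ℝ →ᵇ ℂ))) ∧
      (∀ f, ‖T f‖ ≤ ‖f‖) ∧
      (∀ Γ : Set ℝ, ∀ f ∈ APset Γ, T f ∈ Submodule.span ℂ (APset Γ)) ∧
      ∀ f ∈ S, ‖T f - f‖ ≤ ε := by
  obtain ⟨K, hK, hKpos, hK1, hKf⟩ := exists_kernel_approximating S hS hε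
  obtain ⟨T, hfin, hT, hTspan⟩ := exists_convolution_operator hK
  refine ⟨T, hfin, fun f => ?_, fun Γ f hf => ?_, fun f hf => ?_⟩
  · rw [BoundedContinuousFunction.norm_le (norm_nonneg _)]
    intro x
    rw [hT]
    exact norm_ultraMean_translateR_mul_le f hKpos hK1 x
  · have h := hTspan Γ f fun l hl => by
      rw [← hf.1.bohrCoeffR_eq]
      by_contra hne
      exact hl (hf.2 hne)
    refine Submodule.span_mono ?_ h
    rintro _ ⟨l, hl, rfl⟩
    exact expBCF_mem_APset hl
  · rw [BoundedContinuousFunction.norm_le hε.le]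
    intro x
    rw [BoundedContinuousFunction.coe_sub, Pi.sub_apply, hT]
    exact hKf f hf x

/-- A net of contractions converging pointwise to the identity on a set converges uniformly on
compact subsets of the closed span of that set. -/
theorem exists_contraction_approx_on_compact {E : Type*} [NormedAddCommGroup E] [NormedSpace ℂ E]
    {A : Set E} {p : (E →L[ℂ] E) → Prop} (hp : ∀ T, p T → ∀ f, ‖T f‖ ≤ ‖f‖)
    (happ : ∀ S : Finset E, ↑S ⊆ A → ∀ ε > 0, ∃ T, p T ∧ ∀ f ∈ S, ‖T f - f‖ ≤ ε)
    {K : Set E} (hK : IsCompact K) (hKA : K ⊆ (Submodule.span ℂ A).topologicalClosure)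
    {ε : ℝ} (hε : 0 < ε) : ∃ T, p T ∧ ∀ f ∈ K, ‖T f - f‖ < ε := by
  classical
  have hex : ∀ i : Finset A × ℕ, ∃ T, p T ∧ ∀ f ∈ i.1, ‖T f - f‖ ≤ 1 / ((i.2 : ℝ) + 1) :=
    fun i => by
      obtain ⟨T, hT, hT'⟩ := happ (i.1.image Subtype.val)
        (by simp) (1 / ((i.2 : ℝ) + 1)) (by positivity)
      exact ⟨T, hT, fun f hf => hT' f (Finset.mem_image_of_mem _ hf)⟩
  choose T hpT hT using hex
  have hspan : ∀ f ∈ Submodule.span ℂ A, Tendsto (fun i => T i f) atTop (𝓝 f) := by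
    intro f hf
    induction hf using Submodule.span_induction with
    | mem f hf =>
      rw [Metric.tendsto_nhds]
      intro η hη
      obtain ⟨n, hn⟩ := exists_nat_one_div_lt hη
      filter_upwards [eventually_ge_atTop (({⟨f, hf⟩} : Finset A), n)] with i hi
      have h1 : (⟨f, hf⟩ : A) ∈ i.1 := hi.1 (Finset.mem_singleton_self _)
      have h2 : n ≤ i.2 := hi.2
      rw [dist_eq_norm]
      refine (hT i _ h1).trans_lt (lt_of_le_of_lt ?_ hn)
      gcongr
    | zero => simp
    | add f g _ _ hf hg => simpa only [map_add] using hf.add hg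
    | smul c f _ hf => simpa only [map_smul] using hf.const_smul c
  have hclose : ∀ i f g, ‖T i f - f‖ ≤ ‖T i g - g‖ + 2 * ‖f - g‖ := fun i f g => by
    have h1 : T i f - f = (T i g - g) + (T i (f - g) - (f - g)) := by
      rw [map_sub]
      abel
    rw [h1]
    have := hp _ (hpT i) (f - g)
    linarith [norm_add_le (T i g - g) (T i (f - g) - (f - g)), norm_sub_le (T i (f - g)) (f - g)]
  obtain ⟨t, htK, htfin, hcov⟩ := Metric.finite_approx_of_totallyBounded hK.totallyBounded
    (ε / 8) (by positivity)
  have hev : ∀ᶠ i in atTop, ∀ g ∈ t, ‖T i g - g‖ < ε / 2 := by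
    rw [eventually_all_finite htfin]
    intro g hg
    obtain ⟨g', hg', hd⟩ := Metric.mem_closure_iff.1 (hKA (htK hg)) (ε / 8) (by positivity)
    filter_upwards [Metric.tendsto_nhds.1 (hspan g' hg') (ε / 4) (by positivity)] with i hi
    rw [dist_eq_norm] at hi hd
    linarith [hclose i g g']
  obtain ⟨i, hi⟩ := hev.exists
  refine ⟨T i, hpT i, fun f hf => ?_⟩
  have := hcov hf
  simp only [Set.mem_iUnion, Metric.mem_ball] at this
  obtain ⟨g, hg, hd⟩ := this
  rw [dist_eq_norm] at hd
  linarith [hclose i f g, hi g hg]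

end SAP

theorem stmt0 (Γ : Set ℝ) (hΓ : SAP.IsUnitalSemigroup Γ) :
    SAP.HasApproxProperty ↥((Submodule.span ℂ (SAP.APset Γ)).topologicalClosure) := by
  intro K hK ε hε
  set X := (Submodule.span ℂ (SAP.APset Γ)).topologicalClosure
  let p : ((ℝ →ᵇ ℂ) →L[ℂ] (ℝ →ᵇ ℂ)) → Prop := fun T =>
    FiniteDimensional ℂ (LinearMap.range (T : (ℝ →ᵇ ℂ) →ₗ[ℂ] (ℝ →ᵇ ℂ))) ∧
      (∀ f, ‖T f‖ ≤ ‖f‖) ∧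
      ∀ f ∈ SAP.APset Γ, T f ∈ Submodule.span ℂ (SAP.APset Γ)
  obtain ⟨T, ⟨hfin, -, hmap⟩, hT⟩ := SAP.exists_contraction_approx_on_compact
    (A := SAP.APset Γ) (p := p) (fun T hT => hT.2.1)
    (fun S hS η hη => by
      obtain ⟨T, h1, h2, h3, h4⟩ :=
        SAP.exists_finiteRank_contraction S (fun f hf => (hS hf).1) hη
      exact ⟨T, ⟨h1, h2, h3 Γ⟩, h4⟩)
    (hK.image continuous_subtype_val) (by rintro _ ⟨f, -, rfl⟩; exact f.2) hε
  have hmapX : ∀ f : X, T f ∈ X := fun f => by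
    have hle : Submodule.span ℂ (SAP.APset Γ) ≤
        (Submodule.span ℂ (SAP.APset Γ)).comap (T : (ℝ →ᵇ ℂ) →ₗ[ℂ] (ℝ →ᵇ ℂ)) :=
      Submodule.span_le.2 hmap
    exact map_mem_closure T.continuous f.2 fun g hg => hle hg
  let T' : X →L[ℂ] X := (T.comp X.subtypeL).codRestrict X hmapX
  refine ⟨T', ?_, fun f hf => hT f ⟨f, hf, rfl⟩⟩
  have hrange : ∀ g : LinearMap.range (T' : X →ₗ[ℂ] X),
      ((g : X) : ℝ →ᵇ ℂ) ∈ LinearMap.range (T : (ℝ →ᵇ ℂ) →ₗ[ℂ] (ℝ →ᵇ ℂ)) := by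
    rintro ⟨_, f, rfl⟩
    exact ⟨f, rfl⟩
  refine FiniteDimensional.of_injective
    ((X.subtype.comp (LinearMap.range (T' : X →ₗ[ℂ] X)).subtype).codRestrict _ hrange) ?_
  intro g h hgh
  have hval := congrArg Subtype.val hgh
  exact Subtype.ext (Subtype.ext hval)
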